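/- arXiv:0710.4870 — 2 statements merged into one kernel-verified Lean document; each statement's English description precedes it below -/
import Mathlib

section
/- For every n ≥ 1, the indicator function of an A-type spherical polytope in Sⁿ⁻¹ cannot equal (up to a set of measure zero) a finite real linear combination of indicator functions of B-type spherical polytopes. -/
open Set Metric MeasureTheory
open scoped RealInnerProductSpace

noncomputable section

abbrev Euc (n : ℕ) : Type := EuclideanSpace ℝ (Fin n)

def unitSphere (n : ℕ) : Set (Euc n) := Metric.sphere 0 1

/-- A convex spherical polytope: the intersection of the unit sphere with finitely many
closed halfspaces whose boundary hyperplanes pass through the origin. -/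
def IsSphPolytope {n : ℕ} (Q : Set (Euc n)) : Prop :=
  ∃ C : Finset (Euc n), Q = unitSphere n ∩ ⋂ c ∈ C, {y : Euc n | 0 ≤ ⟪c, y⟫}

/-- The relative interior of a subset of the unit sphere, in the sphere. -/
def sphInterior {n : ℕ} (Q : Set (Euc n)) : Set (Euc n) :=
  {x | x ∈ Q ∧ ∃ ε > 0, ∀ y ∈ unitSphere n, dist y x < ε → y ∈ Q}

/-- A B-type set contains a pair of antipodal points of the sphere. -/
def IsBType {n : ℕ} (Q : Set (Euc n)) : Prop := ∃ x ∈ Q, -x ∈ Q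

/-!
The sphere enters only through cones: an equation between indicators of cones that holds almost
everywhere on the sphere holds Lebesgue almost everywhere, because such indicators are constant on
rays and locally constant off the null frontiers of the cones.

The indicator of a cone with `±w` in it is `w`-periodic, so the forward difference in direction `w`
kills it. Applying one such difference for each B-type cone turns the right-hand side into `0`. On
the other hand, if `w` is outside the closed cone over `P`, then every ray in direction `w`
eventually leaves that cone; functions vanishing far out in direction `w` are stable under
differences, and among them only `0` is `w`-periodic. Hence the differences can be undone one at a
time, and the indicator of the cone over `P` vanishes almost everywhere, which is absurd.
-/

open Filter Module
open scoped Topology fwdDiff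

section Periodic

variable {V M ι : Type*} [AddCommGroup V] [AddCommGroup M]

/-- Every orbit `x, x + w, x + 2w, …` eventually stays in the zero set of `f`: the decay condition
that is preserved by differences and excludes nonzero `w`-periodic functions. -/
def EventuallyZeroAlong (f : V → M) (w : V) : Prop :=
  ∀ x, ∀ᶠ n : ℕ in atTop, f (x + n • w) = 0

theorem EventuallyZeroAlong.fwdDiff {f : V → M} {w : V} (hf : EventuallyZeroAlong f w) (h : V) :
    EventuallyZeroAlong (Δ_[h] f) w := fun x ↦ by
  filter_upwards [hf x, hf (x + h)] with n hx hxh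
  rw [_root_.fwdDiff, add_right_comm, hx, hxh, sub_zero]

theorem fwdDiff_eq_zero_of_periodic {g : V → M} {w : V} (hg : g.Periodic w) :
    Δ_[w] g = 0 :=
  funext fun x ↦ sub_eq_zero.2 (hg x)

theorem periodic_fwdDiff {g : V → M} {w : V} (hg : g.Periodic w) (h : V) :
    (Δ_[h] g).Periodic w := fun x ↦ by
  rw [_root_.fwdDiff, add_right_comm, hg, hg, _root_.fwdDiff]

variable [MeasurableSpace V] [MeasurableAdd V] {μ : Measure V} [μ.IsAddRightInvariant]

theorem ae_comp_add_right {p : V → Prop} (hp : ∀ᵐ x ∂μ, p x) (h : V) : ∀ᵐ x ∂μ, p (x + h) :=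
  (measurePreserving_add_right μ h).quasiMeasurePreserving.ae hp

theorem fwdDiff_ae_congr {f g : V → M} (hfg : f =ᵐ[μ] g) (h : V) :
    Δ_[h] f =ᵐ[μ] Δ_[h] g := by
  filter_upwards [hfg, ae_comp_add_right hfg h] with x hx hxh
  rw [_root_.fwdDiff, _root_.fwdDiff, hx, hxh]

theorem EventuallyZeroAlong.ae_eq_zero_of_fwdDiff {f : V → M} {w : V}
    (hf : EventuallyZeroAlong f w) (hΔ : Δ_[w] f =ᵐ[μ] 0) : f =ᵐ[μ] 0 := by
  have hstep : ∀ᵐ x ∂μ, ∀ n : ℕ, Δ_[w] f (x + n • w) = 0 :=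
    ae_all_iff.2 fun n ↦ ae_comp_add_right hΔ (n • w)
  filter_upwards [hstep] with x hx
  have hconst (n : ℕ) : f (x + n • w) = f x := by
    induction n with
    | zero => rw [zero_nsmul, add_zero]
    | succ n ih => rw [succ_nsmul, ← add_assoc, sub_eq_zero.1 (hx n), ih]
  obtain ⟨n, hn⟩ := (hf x).exists
  exact (hconst n).symm.trans hn

theorem ae_eq_zero_of_ae_eq_sum_periodic {w : ι → V} (s : Finset ι) {f : V → M} {g : ι → V → M}
    (hf : ∀ i ∈ s, EventuallyZeroAlong f (w i)) (hg : ∀ i ∈ s, (g i).Periodic (w i))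
    (hfg : f =ᵐ[μ] ∑ i ∈ s, g i) : f =ᵐ[μ] 0 := by
  induction s using Finset.cons_induction generalizing f g with
  | empty => simpa using hfg
  | cons j s hj ih =>
    rw [Finset.forall_mem_cons] at hf hg
    refine hf.1.ae_eq_zero_of_fwdDiff (ih (fun i hi ↦ (hf.2 i hi).fwdDiff (w j))
      (fun i hi ↦ periodic_fwdDiff (hg.2 i hi) (w j)) ?_)
    simpa only [Finset.sum_cons, fwdDiff_add, fwdDiff_finsetSum, fwdDiff_eq_zero_of_periodic hg.1,
      zero_add] using fwdDiff_ae_congr hfg (w j)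

end Periodic

section Cone

variable {E : Type*} [AddCommGroup E] [Module ℝ E]

theorem add_mem_cone_iff_of_mem_lineal {L : PointedCone ℝ E} {w : E} (hw : w ∈ L.lineal)
    (x : E) : x + w ∈ L ↔ x ∈ L :=
  ⟨fun h ↦ by simpa using L.add_mem h hw.2, fun h ↦ L.add_mem h hw.1⟩

variable [TopologicalSpace E] [ContinuousAdd E] [ContinuousSMul ℝ E]

theorem eventually_add_nsmul_notMem (K : ProperCone ℝ E) {w : E} (hw : w ∉ K) (x : E) :
    ∀ᶠ n : ℕ in atTop, x + n • w ∉ K := by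
  have hlim : Tendsto (fun n : ℕ ↦ (n : ℝ)⁻¹ • x + w) atTop (𝓝 w) := by
    simpa using (tendsto_inv_atTop_nhds_zero_nat (𝕜 := ℝ)).smul_const x |>.add_const w
  filter_upwards [hlim.eventually (K.isClosed.isOpen_compl.mem_nhds hw), eventually_gt_atTop 0]
    with n hn hpos hmem
  have hpos' : (0 : ℝ) < n := Nat.cast_pos.2 hpos
  refine hn ((K.toPointedCone.smul_mem_iff hpos').1 ?_)
  rwa [smul_add, smul_inv_smul₀ hpos'.ne', Nat.cast_smul_eq_nsmul]

theorem eventuallyZeroAlong_indicator (K : ProperCone ℝ E) {M : Type*} [AddCommGroup M] (c : M)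
    {w : E} (hw : w ∉ K) : EventuallyZeroAlong (indicator (K : Set E) fun _ ↦ c) w := fun x ↦
  (eventually_add_nsmul_notMem K hw x).mono fun _ hn ↦ indicator_of_notMem hn _

end Cone

section Sphere

variable {E : Type*} [NormedAddCommGroup E] [InnerProductSpace ℝ E]

theorem norm_add_sqrt_smul_eq_one {u z : E} (hu : ‖u‖ = 1) (hzu : ⟪z, u⟫ = 0) (hz : ‖z‖ ≤ 1) :
    ‖z + √(1 - ‖z‖ ^ 2) • u‖ = 1 := by
  have hsqrt : √(1 - ‖z‖ ^ 2) ^ 2 = 1 - ‖z‖ ^ 2 :=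
    Real.sq_sqrt (sub_nonneg.2 (pow_le_one₀ (norm_nonneg z) hz))
  have hsq : ‖z + √(1 - ‖z‖ ^ 2) • u‖ ^ 2 = 1 := by
    rw [norm_add_sq_real, inner_smul_right, hzu, norm_smul, mul_pow, hu, Real.norm_eq_abs, sq_abs,
      hsqrt]
    ring
  exact (pow_eq_one_iff_of_nonneg (norm_nonneg _) two_ne_zero).1 hsq

theorem image_orthogonalProjection_sphere_inter_mem_nhds {u : E} (hu : ‖u‖ = 1) {U : Set E}
    (hU : U ∈ 𝓝 u) :
    (ℝ ∙ u)ᗮ.orthogonalProjectionOnto '' (sphere (0 : E) 1 ∩ U) ∈ 𝓝 0 := by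
  -- Near `u` the sphere is a graph over `uᗮ`; the projection inverts its parametrization.
  let graph : (ℝ ∙ u)ᗮ → E := fun z ↦ z + √(1 - ‖z‖ ^ 2) • u
  have hgraph : Continuous graph := by fun_prop
  have hgraph_zero : graph 0 = u := by simp [graph]
  have hgraphU : ∀ᶠ z in 𝓝 0, graph z ∈ U := hgraph.continuousAt (by rwa [hgraph_zero])
  filter_upwards [hgraphU, closedBall_mem_nhds 0 one_pos] with z hzU hz
  have horth : ⟪(z : E), u⟫ = 0 := Submodule.mem_orthogonal_singleton_iff_inner_left.1 z.2
  refine ⟨graph z, ⟨mem_sphere_zero_iff_norm.2 (norm_add_sqrt_smul_eq_one hu horth ?_), hzU⟩, ?_⟩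
  · simpa using hz
  · simp [graph]

variable [FiniteDimensional ℝ E] [MeasurableSpace E] [BorelSpace E]

theorem hausdorffMeasure_sphere_inter_ne_zero {u : E} (hu : ‖u‖ = 1) {U : Set E} (hU : U ∈ 𝓝 u) :
    μH[(finrank ℝ E : ℝ) - 1] (sphere (0 : E) 1 ∩ U) ≠ 0 := by
  intro hzero
  have hu0 : u ≠ 0 := by rintro rfl; simp at hu
  have hdim : (finrank ℝ E : ℝ) - 1 = finrank ℝ (ℝ ∙ u)ᗮ := by
    rw [← (ℝ ∙ u).finrank_add_finrank_orthogonal, finrank_span_singleton hu0]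
    push_cast
    ring
  rw [hdim] at hzero
  have hle := ((ℝ ∙ u)ᗮ.lipschitzWith_orthogonalProjectionOnto).hausdorffMeasure_image_le
    (Nat.cast_nonneg (finrank ℝ (ℝ ∙ u)ᗮ)) (sphere (0 : E) 1 ∩ U)
  rw [hzero, mul_zero] at hle
  exact (Measure.measure_pos_of_mem_nhds _
    (image_orthogonalProjection_sphere_inter_mem_nhds hu hU)).not_ge hle

theorem ae_of_ae_sphere [Nontrivial E] (μ : Measure E) [μ.IsAddHaarMeasure] {p : E → Prop}
    (hray : ∀ r : ℝ, 0 < r → ∀ x, p (r • x) ↔ p x) (hloc : ∀ᵐ x ∂μ, ∀ᶠ y in 𝓝 x, p y ↔ p x)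
    (hp : ∀ᵐ x ∂(μH[(finrank ℝ E : ℝ) - 1]).restrict (sphere (0 : E) 1), p x) :
    ∀ᵐ x ∂μ, p x := by
  filter_upwards [hloc, Measure.ae_ne μ 0] with x hx hx0
  have hnorm : 0 < ‖x‖ := norm_pos_iff.2 hx0
  have hscale : Tendsto (fun y : E ↦ ‖x‖ • y) (𝓝 (‖x‖⁻¹ • x)) (𝓝 x) := by
    simpa [hnorm.ne'] using (continuous_const_smul ‖x‖).tendsto (‖x‖⁻¹ • x)
  have hnear : ∀ᶠ y in 𝓝 (‖x‖⁻¹ • x), p y ↔ p x :=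
    (hscale.eventually hx).mono fun y hy ↦ (hray _ hnorm y).symm.trans hy
  rw [ae_restrict_iff' isClosed_sphere.measurableSet] at hp
  by_contra hpx
  refine hausdorffMeasure_sphere_inter_ne_zero (norm_smul_inv_norm (𝕜 := ℝ) hx0) hnear
    (measure_mono_null ?_ hp)
  rintro y ⟨hy, hyx⟩ hpy
  exact hpx (hyx.1 (hpy hy))

theorem ae_eventually_mem_iff_of_convex (μ : Measure E) [μ.IsAddHaarMeasure] {s : Set E}
    (hs : Convex ℝ s) : ∀ᵐ x ∂μ, ∀ᶠ y in 𝓝 x, y ∈ s ↔ x ∈ s := by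
  filter_upwards [measure_eq_zero_iff_ae_notMem.1 (hs.addHaar_frontier μ)] with x hx
  by_cases hxs : x ∈ s
  · have hint : x ∈ interior s := by
      by_contra hint
      exact hx ⟨subset_closure hxs, hint⟩
    filter_upwards [mem_interior_iff_mem_nhds.1 hint] with y hy using iff_of_true hy hxs
  · have hcl : x ∉ closure s := fun hcl ↦ hx ⟨hcl, fun hint ↦ hxs (interior_subset hint)⟩
    filter_upwards [isClosed_closure.isOpen_compl.mem_nhds hcl] with y hy
    exact iff_of_false (fun hys ↦ hy (subset_closure hys)) hxs

theorem ae_indicator_eq_sum_of_ae_sphere [Nontrivial E] {ι : Type*} [Fintype ι] (μ : Measure E)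
    [μ.IsAddHaarMeasure] (K : PointedCone ℝ E) (L : ι → PointedCone ℝ E) (α : ι → ℝ)
    (h : ∀ᵐ x ∂(μH[(finrank ℝ E : ℝ) - 1]).restrict (sphere (0 : E) 1),
      indicator (K : Set E) (fun _ ↦ (1 : ℝ)) x =
        ∑ i, α i * indicator (L i : Set E) (fun _ ↦ (1 : ℝ)) x) :
    ∀ᵐ x ∂μ, indicator (K : Set E) (fun _ ↦ (1 : ℝ)) x =
      ∑ i, α i * indicator (L i : Set E) (fun _ ↦ (1 : ℝ)) x := by
  refine ae_of_ae_sphere μ (fun r hr x ↦ ?_) ?_ h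
  · have hcone (C : PointedCone ℝ E) : indicator (C : Set E) (fun _ ↦ (1 : ℝ)) (r • x) =
        indicator (C : Set E) (fun _ ↦ (1 : ℝ)) x :=
      indicator_const_eq_indicator_const (C.smul_mem_iff hr)
    simp only [hcone]
  · filter_upwards [ae_eventually_mem_iff_of_convex μ K.convex,
      ae_all_iff.2 fun i ↦ ae_eventually_mem_iff_of_convex μ (L i).convex] with x hK hL
    filter_upwards [hK, eventually_all.2 hL] with y hyK hyL
    have hLeq (i : ι) : indicator (L i : Set E) (fun _ ↦ (1 : ℝ)) y =
        indicator (L i : Set E) (fun _ ↦ (1 : ℝ)) x :=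
      indicator_const_eq_indicator_const (hyL i)
    simp only [indicator_const_eq_indicator_const hyK, hLeq]

end Sphere

section Lineality

variable {E : Type*} [NormedAddCommGroup E] [NormedSpace ℝ E] [MeasurableSpace E] [BorelSpace E]

theorem not_ae_indicator_eq_sum (μ : Measure E) [μ.IsAddHaarMeasure] {ι : Type*} [Fintype ι]
    (K : ProperCone ℝ E) (hK : (interior (K : Set E)).Nonempty) (L : ι → PointedCone ℝ E)
    (hL : ∀ i, ¬ ((L i).lineal : Set E) ⊆ K) (α : ι → ℝ) :
    ¬ ∀ᵐ x ∂μ, indicator (K : Set E) (fun _ ↦ (1 : ℝ)) x =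
      ∑ i, α i * indicator (L i : Set E) (fun _ ↦ (1 : ℝ)) x := by
  intro hsum
  choose w hwL hwK using fun i ↦ not_subset.1 (hL i)
  have hperiodic (i : ι) :
      (fun x ↦ α i * indicator (L i : Set E) (fun _ ↦ (1 : ℝ)) x).Periodic (w i) := fun x ↦
    congrArg (α i * ·) <| indicator_const_eq_indicator_const <|
      add_mem_cone_iff_of_mem_lineal (hwL i) x
  have hzero : indicator (K : Set E) (fun _ ↦ (1 : ℝ)) =ᵐ[μ] 0 :=
    ae_eq_zero_of_ae_eq_sum_periodic Finset.univ
      (fun i _ ↦ eventuallyZeroAlong_indicator K 1 (hwK i)) (fun i _ ↦ hperiodic i)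
      (hsum.mono fun x hx ↦ by rw [hx, Finset.sum_apply])
  have hnull : μ K = 0 := measure_eq_zero_iff_ae_notMem.2 <|
    hzero.mono fun x hx ↦ by simpa [indicator] using hx
  obtain ⟨x, hx⟩ := hK
  exact (Measure.measure_pos_of_mem_nhds μ (mem_interior_iff_mem_nhds.1 hx)).ne' hnull

end Lineality

section SphericallyConvex

variable {n : ℕ}

/-- A closed spherically convex set, encoded as the trace on the unit sphere of a closed convex
cone; unlike a polytope it may need infinitely many halfspaces. -/
def IsClosedSphConvex (Q : Set (Euc n)) : Prop :=
  ∃ K : ProperCone ℝ (Euc n), Q = unitSphere n ∩ K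

theorem IsSphPolytope.isClosedSphConvex {Q : Set (Euc n)} (hQ : IsSphPolytope Q) :
    IsClosedSphConvex Q := by
  obtain ⟨C, rfl⟩ := hQ
  refine ⟨ProperCone.innerDual (C : Set (Euc n)), ?_⟩
  ext x
  simp

theorem interior_nonempty_of_sphInterior_nonempty {K : PointedCone ℝ (Euc n)}
    (h : (sphInterior (unitSphere n ∩ K)).Nonempty) : (interior (K : Set (Euc n))).Nonempty := by
  obtain ⟨x, ⟨hxS, -⟩, ε, hε, hball⟩ := h
  have hx : ‖x‖ = 1 := mem_sphere_zero_iff_norm.1 hxS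
  have hx0 : x ≠ 0 := ne_zero_of_mem_unit_sphere ⟨x, hxS⟩
  have hlim : Tendsto (fun y : Euc n ↦ ‖y‖⁻¹ • y) (𝓝 x) (𝓝 x) := by
    have hcont : ContinuousAt (fun y : Euc n ↦ ‖y‖⁻¹ • y) x :=
      (continuousAt_id.norm.inv₀ (norm_ne_zero_iff.2 hx0)).smul continuousAt_id
    simpa [ContinuousAt, hx] using hcont
  refine ⟨x, mem_interior_iff_mem_nhds.2 ?_⟩
  filter_upwards [hlim.eventually (ball_mem_nhds x hε), isOpen_ne.mem_nhds hx0] with y hy hy0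
  have hyK := (hball _ (mem_sphere_zero_iff_norm.2 (norm_smul_inv_norm (𝕜 := ℝ) hy0)) hy).2
  exact (K.smul_mem_iff (inv_pos.2 (norm_pos_iff.2 hy0))).1 hyK

theorem not_lineal_subset_of_isBType {K L : PointedCone ℝ (Euc n)}
    (hK : ¬ IsBType (unitSphere n ∩ K)) (hL : IsBType (unitSphere n ∩ L)) :
    ¬ (L.lineal : Set (Euc n)) ⊆ K := fun hLK ↦ by
  obtain ⟨x, ⟨hxS, hxL⟩, hnS, hnL⟩ := hL
  have hx : x ∈ L.lineal := ⟨hxL, hnL⟩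
  exact hK ⟨x, ⟨hxS, hLK hx⟩, hnS, hLK (L.lineal.neg_mem hx)⟩

end SphericallyConvex

theorem atype_not_lincomb_of_btype_general {n : ℕ} {P : Set (Euc n)} (hP : IsClosedSphConvex P)
    (hPfull : (sphInterior P).Nonempty) (hPA : ¬ IsBType P) {ι : Type*} [Fintype ι]
    {Q : ι → Set (Euc n)} (hQ : ∀ i, IsClosedSphConvex (Q i)) (hQB : ∀ i, IsBType (Q i))
    (α : ι → ℝ) :
    ¬ ∀ᵐ x ∂((μH[((n : ℝ) - 1)] : Measure (Euc n)).restrict (unitSphere n)),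
        indicator P (fun _ ↦ (1 : ℝ)) x = ∑ i, α i * indicator (Q i) (fun _ ↦ (1 : ℝ)) x := by
  intro hae
  obtain ⟨K, rfl⟩ := hP
  choose L hL using hQ
  obtain rfl : Q = fun i ↦ unitSphere n ∩ L i := funext hL
  obtain ⟨x₀, hx₀⟩ := hPfull
  have : Nontrivial (Euc n) := ⟨x₀, 0, ne_zero_of_mem_unit_sphere ⟨x₀, hx₀.1.1⟩⟩
  have hcones : ∀ᵐ x ∂(μH[(finrank ℝ (Euc n) : ℝ) - 1]).restrict (sphere (0 : Euc n) 1),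
      indicator (K : Set (Euc n)) (fun _ ↦ (1 : ℝ)) x =
        ∑ i, α i * indicator (L i : Set (Euc n)) (fun _ ↦ (1 : ℝ)) x := by
    rw [finrank_euclideanSpace_fin]
    filter_upwards [hae, ae_restrict_mem isClosed_sphere.measurableSet] with x hx hxS
    have hxS : x ∈ unitSphere n := hxS
    have htrace (A : Set (Euc n)) : indicator (unitSphere n ∩ A) (fun _ ↦ (1 : ℝ)) x =
        indicator A (fun _ ↦ (1 : ℝ)) x :=
      indicator_const_eq_indicator_const (and_iff_right hxS)
    simpa only [htrace] using hx
  exact not_ae_indicator_eq_sum volume K (interior_nonempty_of_sphInterior_nonempty ⟨x₀, hx₀⟩)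
    (fun i ↦ (L i).toPointedCone) (fun i ↦ not_lineal_subset_of_isBType hPA (hQB i)) α
    (ae_indicator_eq_sum_of_ae_sphere volume K.toPointedCone _ α hcones)

/-- The indicator of a full-dimensional A-type spherical polytope is not equal, up to a
set of `(n-1)`-dimensional Hausdorff measure zero on the sphere, to a finite real linear
combination of indicators of full-dimensional B-type spherical polytopes. -/
theorem atype_not_lincomb_of_btype (n : ℕ) (hn : 1 ≤ n)
    (P : Set (Euc n)) (hP : IsSphPolytope P) (hPfull : (sphInterior P).Nonempty)
    (hPA : ¬ IsBType P) :
    ¬ ∃ (k : ℕ) (Q : Fin k → Set (Euc n)) (α : Fin k → ℝ),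
      (∀ i, IsSphPolytope (Q i) ∧ (sphInterior (Q i)).Nonempty ∧ IsBType (Q i)) ∧
      (∀ᵐ x ∂((μH[((n : ℝ) - 1)] : Measure (Euc n)).restrict (unitSphere n)),
        Set.indicator P (fun _ => (1 : ℝ)) x
          = ∑ i, α i * Set.indicator (Q i) (fun _ => (1 : ℝ)) x) := by
  rintro ⟨k, Q, α, hQ, hae⟩
  exact atype_not_lincomb_of_btype_general hP.isClosedSphConvex hPfull hPA
    (fun i ↦ (hQ i).1.isClosedSphConvex) (fun i ↦ (hQ i).2.2) α hae
end
end

section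
/- Let a finite tiling of the unit sphere Sⁿ (n > 1) by convex spherical polytopes contain exactly two A-type polytopes P and P′. If x is a vertex of P, then either x or −x is a vertex of P′. -/
open Set Metric
open scoped RealInnerProductSpace

noncomputable section

/-- A finite tiling of the sphere by full-dimensional convex spherical polytopes with
pairwise disjoint (relative) interiors. -/
def IsSphTiling {n : ℕ} (𝒯 : Finset (Set (Euc n))) : Prop :=
  (∀ Q ∈ 𝒯, IsSphPolytope Q ∧ (sphInterior Q).Nonempty) ∧
  (⋃ Q ∈ 𝒯, Q) = unitSphere n ∧
  ∀ Q ∈ 𝒯, ∀ Q' ∈ 𝒯, Q ≠ Q' → sphInterior Q ∩ sphInterior Q' = ∅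

/-- `v` is a vertex (0-dimensional exposed face) of the spherical polytope `Q`. -/
def IsSphVertex {n : ℕ} (Q : Set (Euc n)) (v : Euc n) : Prop :=
  ∃ u : Euc n, (∀ y ∈ Q, 0 ≤ ⟪u, y⟫) ∧ {y ∈ Q | ⟪u, y⟫ = 0} = {v}

/-!
The vertex `x` of `P` extends to a spanning list of vectors along which `P` is pointed: `P` contains
exactly one of `±x`, its tangent cone there contains exactly one of `±v` for the next vector `v`,
and so on. The number of tiles pointed along this list is even, because the tangent cones at `v` and
at `-v` both form cone tilings and contribute the same parity. Hence some tile `Q ≠ P` is pointed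
along the list as well. Since the list spans, the tangent cone of `Q` at `x` or at `-x` contains no
line other than `ℝ x`, so `x` or `-x` is a vertex of `Q`; in particular `Q` is of A-type.
-/

open Filter Topology Submodule
open PointedCone (dual mem_dual mem_lineal)

lemma odd_card_filter_xor_iff {ι : Type*} (F : Finset ι) (P Q : ι → Prop) [DecidablePred P]
    [DecidablePred Q] [DecidablePred fun i ↦ Xor (P i) (Q i)] :
    Odd (F.filter fun i ↦ Xor (P i) (Q i)).card ↔
      Xor (Odd (F.filter P).card) (Odd (F.filter Q).card) := by
  have hcard : (F.filter P).card + (F.filter Q).card =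
      (F.filter fun i ↦ Xor (P i) (Q i)).card + 2 * (F.filter fun i ↦ P i ∧ Q i).card := by
    simp only [Finset.card_filter, Finset.mul_sum, ← Finset.sum_add_distrib]
    refine Finset.sum_congr rfl fun i _ ↦ ?_
    by_cases hP : P i <;> by_cases hQ : Q i <;> simp [hP, hQ, Xor]
  grind

section ActiveNormals

variable {R M E : Type*} [CommRing R] [AddCommGroup M] [Module R M] [AddCommGroup E] [Module R E]
  {p : M →ₗ[R] E →ₗ[R] R} {s : Set M} {v : E}

variable (p) in
/-- The normals in `s` whose inequality is tight at `v`. If `v` lies in the polyhedral cone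
`dual p s`, then `dual p (activeNormals p s v)` is the tangent cone of `dual p s` at `v`. -/
def activeNormals (s : Set M) (v : E) : Set M := {c ∈ s | p c v = 0}

lemma activeNormals_subset : activeNormals p s v ⊆ s := sep_subset _ _

@[simp]
lemma activeNormals_neg : activeNormals p s (-v) = activeNormals p s v := by
  simp only [activeNormals, map_neg, neg_eq_zero]

end ActiveNormals

lemma span_setOf_mem_cons {R E : Type*} [Semiring R] [AddCommMonoid E] [Module R E] (v : E)
    (l : List E) : span R {u | u ∈ v :: l} = span R {v} ⊔ span R {u | u ∈ l} := by
  simp only [List.mem_cons, ofPred_or, ofPred_eq_eq_singleton, span_union]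

section Cones

variable {𝕜 M E ι : Type*} [Field 𝕜] [LinearOrder 𝕜] [IsStrictOrderedRing 𝕜]
  [AddCommGroup M] [Module 𝕜 M] [AddCommGroup E] [Module 𝕜 E]

lemma eventually_map_smul_add_ne_zero (f : E →ₗ[𝕜] 𝕜) {v y : E} (h : f v = 0 → f y ≠ 0) :
    ∀ᶠ t : 𝕜 in atTop, f (t • v + y) ≠ 0 := by
  simp only [map_add, map_smul, smul_eq_mul]
  by_cases hv : f v = 0
  · simp [hv, h hv]
  · filter_upwards [eventually_ne_atTop (-f y / f v)] with t ht
    contrapose! ht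
    rw [eq_div_iff hv]
    linarith

lemma eventually_map_smul_add_nonneg_iff (f : E →ₗ[𝕜] 𝕜) (v y : E) :
    ∀ᶠ t : 𝕜 in atTop, 0 ≤ f (t • v + y) ↔ 0 ≤ f v ∧ (f v = 0 → 0 ≤ f y) := by
  simp only [map_add, map_smul, smul_eq_mul]
  rcases lt_trichotomy (f v) 0 with hv | hv | hv
  · filter_upwards [eventually_gt_atTop (-f y / f v)] with t ht
    rw [div_lt_iff_of_neg hv] at ht
    exact iff_of_false (by linarith) fun h ↦ hv.not_ge h.1
  · simp [hv]
  · filter_upwards [eventually_ge_atTop (-f y / f v)] with t ht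
    rw [div_le_iff₀ hv] at ht
    exact iff_of_true (by linarith) ⟨hv.le, fun h ↦ absurd h hv.ne'⟩

variable {p : M →ₗ[𝕜] E →ₗ[𝕜] 𝕜} {s : Set M} {v w : E} {l : List E}

lemma mem_lineal_dual_iff : w ∈ (dual p s).lineal ↔ ∀ c ∈ s, p c w = 0 := by
  simp only [mem_lineal, mem_dual, map_neg, Left.nonneg_neg_iff]
  exact ⟨fun h c hc ↦ le_antisymm (h.2 hc) (h.1 hc),
    fun h ↦ ⟨fun c hc ↦ (h c hc).ge, fun c hc ↦ (h c hc).le⟩⟩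

lemma self_mem_lineal_dual_activeNormals : v ∈ (dual p (activeNormals p s v)).lineal :=
  mem_lineal_dual_iff.2 fun _ hc ↦ hc.2

lemma lineal_dual_le_lineal_dual_activeNormals :
    (dual p s).lineal ≤ (dual p (activeNormals p s v)).lineal := fun _ hw ↦
  mem_lineal_dual_iff.2 fun c hc ↦ mem_lineal_dual_iff.1 hw c hc.1

lemma eventually_smul_add_mem_dual_iff (hs : s.Finite) (v y : E) :
    ∀ᶠ t : 𝕜 in atTop,
      t • v + y ∈ dual p s ↔ v ∈ dual p s ∧ y ∈ dual p (activeNormals p s v) := by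
  filter_upwards [(eventually_all_finite hs).2 fun c _ ↦
    eventually_map_smul_add_nonneg_iff (p c) v y] with t ht
  simp only [mem_dual, activeNormals, mem_sep_iff, and_imp]
  exact ⟨fun h ↦ ⟨fun c hc ↦ ((ht c hc).1 (h hc)).1, fun c hc ↦ ((ht c hc).1 (h hc)).2⟩,
    fun h c hc ↦ (ht c hc).2 ⟨h.1 hc, h.2 hc⟩⟩

lemma exists_sub_smul_mem_dual (hs : s.Finite) (hv : v ∈ dual p s) (hv' : v ∉ (dual p s).lineal)
    (hw : w ∈ (dual p (activeNormals p s v)).lineal) :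
    ∃ a : 𝕜, w - a • v ∈ dual p s ∧ ∃ c ∈ s, p c v ≠ 0 ∧ p c (w - a • v) = 0 := by
  obtain ⟨c₁, hc₁, hc₁v⟩ : ∃ c ∈ s, p c v ≠ 0 := by
    simpa only [mem_lineal_dual_iff, not_forall, exists_prop] using hv'
  obtain ⟨c₀, ⟨hc₀, hc₀v⟩, hmin⟩ := exists_min_image {c ∈ s | p c v ≠ 0}
    (fun c ↦ p c w / p c v) (hs.subset (sep_subset _ _)) ⟨c₁, hc₁, hc₁v⟩
  refine ⟨p c₀ w / p c₀ v, fun c hc ↦ ?_, c₀, hc₀, hc₀v, by simp [hc₀v]⟩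
  rw [map_sub, map_smul, smul_eq_mul, sub_nonneg]
  by_cases hcv : p c v = 0
  · simp [hcv, mem_lineal_dual_iff.1 hw c ⟨hc, hcv⟩]
  · exact (le_div_iff₀ ((hv hc).lt_of_ne' hcv)).1 (hmin c ⟨hc, hcv⟩)

/-- A ray with a maximal set of tight inequalities is extreme. -/
lemma exists_lineal_dual_activeNormals_le (hs : s.Finite) (hv : v ∈ dual p s)
    (hv' : v ∉ (dual p s).lineal) :
    ∃ u ∈ dual p s, u ∉ (dual p s).lineal ∧
      (dual p (activeNormals p s u)).lineal ≤ span 𝕜 {u} ⊔ (dual p s).lineal := by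
  obtain ⟨u, ⟨hu, hu'⟩, hmax⟩ := Set.Finite.exists_maximalFor' (activeNormals p s)
    {u | u ∈ dual p s ∧ u ∉ (dual p s).lineal}
    (hs.finite_subsets.subset (image_subset_iff.2 fun _ _ ↦ activeNormals_subset)) ⟨v, hv, hv'⟩
  refine ⟨u, hu, hu', fun w hw ↦ ?_⟩
  obtain ⟨a, hmem, c, hc, hcu, hcw⟩ := exists_sub_smul_mem_dual hs hu hu' hw
  have hactive : activeNormals p s u ⊆ activeNormals p s (w - a • u) := fun c hc ↦
    ⟨hc.1, by simp [mem_lineal_dual_iff.1 hw c hc, hc.2]⟩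
  have hlineal : w - a • u ∈ (dual p s).lineal := by
    by_contra hnot
    exact hcu (hmax ⟨hmem, hnot⟩ hactive ⟨hc, hcw⟩).2
  exact mem_sup.2 ⟨a • u, mem_span_singleton.2 ⟨a, rfl⟩, _, hlineal, add_sub_cancel _ _⟩

variable (p) in
/-- The cone `dual p s` contains exactly one of `±v` for the first vector `v` of the list, its
tangent cone there contains exactly one of `±v'` for the next vector `v'`, and so on. -/
def IsPointedAlong : List E → Set M → Prop
  | [], _ => True
  | v :: l, s => Xor (v ∈ dual p s) (-v ∈ dual p s) ∧ IsPointedAlong l (activeNormals p s v)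

lemma IsPointedAlong.disjoint_span_lineal (h : IsPointedAlong p l s) :
    Disjoint (span 𝕜 {u | u ∈ l}) (dual p s).lineal := by
  induction l generalizing s with
  | nil => simp
  | cons v l ih =>
    refine disjoint_def.2 fun w hw hws ↦ ?_
    rw [span_setOf_mem_cons] at hw
    obtain ⟨_, hav, u, hu, rfl⟩ := mem_sup.1 hw
    obtain ⟨a, rfl⟩ := mem_span_singleton.1 hav
    have hu0 : u = 0 := disjoint_def.1 (ih h.2) u hu <|
      (add_mem_cancel_left (smul_mem _ a self_mem_lineal_dual_activeNormals)).1
        (lineal_dual_le_lineal_dual_activeNormals hws)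
    subst hu0
    rw [add_zero] at hws ⊢
    by_contra hne
    have hv : v ∈ (dual p s).lineal :=
      (smul_mem_iff _ fun ha : a = 0 ↦ hne (by simp [ha])).1 hws
    rw [mem_lineal] at hv
    exact (xor_iff_not_iff _ _).1 h.1 (iff_of_true hv.1 hv.2)

lemma IsPointedAlong.lineal_dual_activeNormals_le (h : IsPointedAlong p (v :: l) s)
    (hspan : span 𝕜 {u | u ∈ v :: l} = ⊤) :
    (dual p (activeNormals p s v)).lineal ≤ span 𝕜 {v} := by
  rw [span_setOf_mem_cons] at hspan
  have hv : span 𝕜 {v} ≤ (dual p (activeNormals p s v)).lineal :=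
    (span_singleton_le_iff_mem _ _).2 self_mem_lineal_dual_activeNormals
  refine (eq_of_le_of_inf_le_of_sup_le hv ?_ (hspan ▸ le_top)).ge
  rw [h.2.disjoint_span_lineal.symm.eq_bot]
  exact bot_le

/-- The list consists of extreme rays of successive tangent cones. -/
lemma exists_isPointedAlong_codisjoint {y : E} (hs : s.Finite) (hy : ∀ c ∈ s, 0 < p c y) :
    ∃ l, IsPointedAlong p l s ∧ Codisjoint (span 𝕜 {u | u ∈ l}) (dual p s).lineal := by
  induction hn : s.ncard using Nat.strong_induction_on generalizing s with
  | _ n ih =>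
  rcases s.eq_empty_or_nonempty with rfl | ⟨c, hc⟩
  · exact ⟨[], trivial, codisjoint_iff_le_sup.2 fun w _ ↦
      mem_sup_right (mem_lineal_dual_iff.2 (by simp))⟩
  obtain ⟨v, hv, hv', hle⟩ := exists_lineal_dual_activeNormals_le (p := p) hs
    (fun c hc ↦ (hy c hc).le) fun h ↦ (hy c hc).ne' (mem_lineal_dual_iff.1 h c hc)
  have hssubset : activeNormals p s v ⊂ s := activeNormals_subset.ssubset_of_not_subset
    fun h ↦ hv' (mem_lineal_dual_iff.2 fun c hc ↦ (h hc).2)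
  obtain ⟨l, hl, hcod⟩ := ih _ (hn ▸ ncard_lt_ncard hssubset hs)
    (hs.subset hssubset.subset) (fun c hc ↦ hy c hc.1) rfl
  refine ⟨v :: l, ⟨.inl ⟨hv, fun h ↦ hv' ⟨hv, h⟩⟩, hl⟩, ?_⟩
  rw [span_setOf_mem_cons, codisjoint_iff_le_sup, sup_right_comm]
  exact (codisjoint_iff_le_sup.1 hcod).trans (by rw [sup_comm]; gcongr)

variable (p) in
/-- The polyhedral cones `dual p (s i)`, for `i ∈ F`, tile `E`: every point off the finitely many
hyperplanes with normals in `walls` lies in exactly one of them. -/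
structure IsConeTiling (walls : Set M) (F : Finset ι) (s : ι → Set M) : Prop where
  finite_walls : walls.Finite
  finite_normals : ∀ i ∈ F, (s i).Finite
  existsUnique : ∀ y, (∀ c ∈ walls, p c y ≠ 0) → ∃! i, i ∈ F ∧ y ∈ dual p (s i)

variable {walls : Set M} {F : Finset ι} {s : ι → Set M}

open Classical in
lemma IsConeTiling.tangent (h : IsConeTiling p walls F s) (v : E) :
    IsConeTiling p (activeNormals p walls v) (F.filter fun i ↦ v ∈ dual p (s i))
      (fun i ↦ activeNormals p (s i) v) where
  finite_walls := h.finite_walls.subset activeNormals_subset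
  finite_normals i hi := (h.finite_normals i (Finset.mem_filter.1 hi).1).subset activeNormals_subset
  existsUnique y hy := by
    obtain ⟨t, hwalls, hmem⟩ :=
      (((eventually_all_finite h.finite_walls).2 fun c hc ↦
          eventually_map_smul_add_ne_zero (p c) fun hcv ↦ hy c ⟨hc, hcv⟩).and
        ((Finset.eventually_all F).2 fun i hi ↦
          eventually_smul_add_mem_dual_iff (p := p) (h.finite_normals i hi) v y)).exists
    refine (existsUnique_congr fun i ↦ ?_).1 (h.existsUnique (t • v + y) hwalls)
    rw [Finset.mem_filter, and_assoc]
    exact and_congr_right fun hi ↦ hmem i hi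

open Classical in
/-- The tangent cones at `v` form a tiling and so do those at `-v`; by induction on the list, both
contribute the same parity to the count at the next vector. -/
lemma IsConeTiling.odd_card_isPointedAlong_iff (h : IsConeTiling p walls F s)
    (hl : ∀ c ∈ walls, ∃ v ∈ l, p c v ≠ 0) :
    Odd (F.filter fun i ↦ IsPointedAlong p l (s i)).card ↔ l = [] := by
  induction l generalizing walls F s with
  | nil =>
    obtain ⟨i, ⟨hi, -⟩, huniq⟩ := h.existsUnique 0 fun c hc ↦ by simpa using hl c hc
    have hF : F = {i} :=
      Finset.eq_singleton_iff_unique_mem.2 ⟨hi, fun j hj ↦ huniq j ⟨hj, zero_mem _⟩⟩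
    simp [IsPointedAlong, hF]
  | cons v l ih =>
    have hl' : ∀ c ∈ activeNormals p walls v, ∃ u ∈ l, p c u ≠ 0 := fun c hc ↦ by
      simpa [hc.2] using hl c hc.1
    have hpos := ih (h.tangent v) hl'
    have hneg := ih (h.tangent (-v)) (by rwa [activeNormals_neg])
    simp only [activeNormals_neg, Finset.filter_filter] at hpos hneg
    have hxor (i : ι) : IsPointedAlong p (v :: l) (s i) ↔
        Xor (v ∈ dual p (s i) ∧ IsPointedAlong p l (activeNormals p (s i) v))
          (-v ∈ dual p (s i) ∧ IsPointedAlong p l (activeNormals p (s i) v)) := by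
      simp only [IsPointedAlong, Xor]
      tauto
    simp only [hxor]
    rw [odd_card_filter_xor_iff, hpos, hneg]
    simp

lemma IsConeTiling.exists_ne_isPointedAlong (h : IsConeTiling p walls F s)
    (hwalls : ∀ c ∈ walls, p c ≠ 0) (hspan : span 𝕜 {u | u ∈ l} = ⊤) (hne : l ≠ []) {i : ι}
    (hi : i ∈ F) (hil : IsPointedAlong p l (s i)) :
    ∃ j ∈ F, j ≠ i ∧ IsPointedAlong p l (s j) := by
  classical
  have hl : ∀ c ∈ walls, ∃ v ∈ l, p c v ≠ 0 := by
    intro c hc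
    by_contra! hzero
    exact hwalls c hc (LinearMap.ext_on hspan fun v hv ↦ hzero v hv)
  by_contra! hall
  have hsingle : (F.filter fun j ↦ IsPointedAlong p l (s j)) = {i} := by
    ext j
    simp only [Finset.mem_filter, Finset.mem_singleton]
    exact ⟨fun hj ↦ by_contra fun hji ↦ hall j hj.1 hji hj.2, fun hj ↦ hj ▸ ⟨hi, hil⟩⟩
  exact hne ((h.odd_card_isPointedAlong_iff hl).1 (by simp [hsingle]))

end Cones

section Sphere

lemma interior_dual_innerₗ {E : Type*} [NormedAddCommGroup E] [InnerProductSpace ℝ E] {s : Set E}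
    (hs : s.Finite) (h0 : 0 ∉ s) :
    interior (dual (innerₗ E) s : Set E) = {y | ∀ c ∈ s, 0 < ⟪c, y⟫} := by
  have hhalf : ∀ c ∈ s, interior {y : E | 0 ≤ ⟪c, y⟫} = {y | 0 < ⟪c, y⟫} := by
    intro c hc
    have hne : innerSL ℝ c ≠ 0 := fun h ↦
      h0 (inner_self_eq_zero (𝕜 := ℝ).1 (DFunLike.congr_fun h c) ▸ hc)
    have hopen : IsOpenMap (innerSL ℝ c) := (innerSL ℝ c).isOpenMap_of_ne_zero hne
    have hinterior :=
      hopen.preimage_interior_eq_interior_preimage (innerSL ℝ c).continuous (Ici 0)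
    rw [interior_Ici] at hinterior
    exact hinterior.symm
  have hdual : (dual (innerₗ E) s : Set E) = ⋂ c ∈ s, {y | 0 ≤ ⟪c, y⟫} := by ext; simp
  rw [hdual, hs.interior_biInter, iInter₂_congr hhalf]
  ext
  simp

variable {n : ℕ}

lemma mem_unitSphere {y : Euc n} : y ∈ unitSphere n ↔ ‖y‖ = 1 := mem_sphere_zero_iff_norm

lemma inv_norm_smul_mem_unitSphere {y : Euc n} (hy : y ≠ 0) : ‖y‖⁻¹ • y ∈ unitSphere n :=
  mem_unitSphere.2 (norm_smul_inv_norm (𝕜 := ℝ) hy)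

lemma eq_or_eq_neg_of_mem_unitSphere {x y : Euc n} (hx : x ∈ unitSphere n) (hy : y ∈ unitSphere n)
    (hspan : y ∈ span ℝ {x}) : y = x ∨ y = -x := by
  obtain ⟨a, rfl⟩ := mem_span_singleton.1 hspan
  have ha : |a| = 1 := by
    simpa [norm_smul, mem_unitSphere.1 hx] using mem_unitSphere.1 hy
  rcases eq_or_eq_neg_of_abs_eq ha with rfl | rfl
  · exact .inl (one_smul ℝ x)
  · exact .inr (neg_one_smul ℝ x)

lemma sphInterior_unitSphere_inter (K : PointedCone ℝ (Euc n)) :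
    sphInterior (unitSphere n ∩ K) = unitSphere n ∩ interior K := by
  ext y
  constructor
  · rintro ⟨⟨hy, -⟩, ε, hε, hball⟩
    have hy1 : ‖y‖ = 1 := mem_unitSphere.1 hy
    have hy0 : y ≠ 0 := norm_ne_zero_iff.1 (by simp [hy1])
    have hcont : ContinuousAt (fun z : Euc n ↦ ‖z‖⁻¹ • z) y :=
      (continuousAt_id.norm.inv₀ (norm_ne_zero_iff.2 hy0)).smul continuousAt_id
    have hnear : ∀ᶠ z in 𝓝 y, dist (‖z‖⁻¹ • z) y < ε := by
      simpa [hy1] using hcont.eventually (ball_mem_nhds _ hε)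
    refine ⟨hy, mem_interior_iff_mem_nhds.2 ?_⟩
    filter_upwards [hnear, eventually_ne_nhds hy0] with z hz hz0
    exact (K.smul_mem_iff (inv_pos.2 (norm_pos_iff.2 hz0))).1
      (hball _ (inv_norm_smul_mem_unitSphere hz0) hz).2
  · rintro ⟨hy, hyK⟩
    obtain ⟨ε, hε, hball⟩ := Metric.mem_nhds_iff.1 (mem_interior_iff_mem_nhds.1 hyK)
    exact ⟨⟨hy, interior_subset hyK⟩, ε, hε, fun z hz hzy ↦ ⟨hz, hball hzy⟩⟩

/-- `s` is a finite set of nonzero inner normals of halfspaces that cut `Q` out of the sphere. -/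
structure IsNormalSet (Q s : Set (Euc n)) : Prop where
  finite : s.Finite
  zero_notMem : 0 ∉ s
  eq_inter : Q = unitSphere n ∩ dual (innerₗ (Euc n)) s

variable {Q s : Set (Euc n)} {x : Euc n}

lemma IsSphPolytope.exists_isNormalSet (hQ : IsSphPolytope Q) : ∃ s, IsNormalSet Q s := by
  obtain ⟨C, rfl⟩ := hQ
  refine ⟨C \ {0}, C.finite_toSet.sdiff, by simp, ?_⟩
  ext y
  have (c : Euc n) : (c ∈ C → c ≠ 0 → 0 ≤ ⟪c, y⟫) ↔ (c ∈ C → 0 ≤ ⟪c, y⟫) := by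
    by_cases hc : c = 0 <;> simp [hc]
  simp [this]

lemma IsNormalSet.mem_iff (h : IsNormalSet Q s) {y : Euc n} :
    y ∈ Q ↔ y ∈ unitSphere n ∧ y ∈ dual (innerₗ (Euc n)) s := by
  rw [h.eq_inter]
  rfl

lemma IsNormalSet.inv_norm_smul_mem_iff (h : IsNormalSet Q s) {y : Euc n} (hy : y ≠ 0) :
    ‖y‖⁻¹ • y ∈ Q ↔ y ∈ dual (innerₗ (Euc n)) s := by
  rw [h.mem_iff, and_iff_right (inv_norm_smul_mem_unitSphere hy),
    PointedCone.smul_mem_iff _ (inv_pos.2 (norm_pos_iff.2 hy))]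

lemma IsNormalSet.mem_sphInterior_iff (h : IsNormalSet Q s) {y : Euc n} :
    y ∈ sphInterior Q ↔ y ∈ unitSphere n ∧ ∀ c ∈ s, 0 < ⟪c, y⟫ := by
  rw [h.eq_inter, sphInterior_unitSphere_inter, interior_dual_innerₗ h.finite h.zero_notMem]
  rfl

lemma IsSphVertex.mem (hx : IsSphVertex Q x) : x ∈ Q := by
  obtain ⟨u, -, hface⟩ := hx
  exact (hface.ge rfl).1

lemma IsNormalSet.neg_notMem_of_isSphVertex (h : IsNormalSet Q s) (hx : IsSphVertex Q x) :
    -x ∉ Q := by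
  intro hneg
  have hx1 : ‖x‖ = 1 := mem_unitSphere.1 (h.mem_iff.1 hx.mem).1
  obtain ⟨u, -, hface⟩ := hx
  have hux : ⟪u, x⟫ = 0 := (hface.ge rfl).2
  have hnegx : -x = x := hface.le ⟨hneg, by rw [inner_neg_right, hux, neg_zero]⟩
  have hinner := congrArg (⟪x, ·⟫) hnegx
  norm_num [inner_neg_right, real_inner_self_eq_norm_sq, hx1] at hinner

lemma IsNormalSet.lineal_dual_activeNormals_le_of_isSphVertex (h : IsNormalSet Q s)
    (hx : IsSphVertex Q x) :
    (dual (innerₗ (Euc n)) (activeNormals (innerₗ (Euc n)) s x)).lineal ≤ span ℝ {x} := by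
  intro w hw
  have hxs := (h.mem_iff.1 hx.mem).2
  obtain ⟨u, hu, hface⟩ := hx
  have hux : ⟪u, x⟫ = 0 := (hface.ge rfl).2
  obtain ⟨t, hadd, hsub⟩ :=
    ((eventually_smul_add_mem_dual_iff (p := innerₗ (Euc n)) h.finite x w).and
      (eventually_smul_add_mem_dual_iff (p := innerₗ (Euc n)) h.finite x (-w))).exists
  replace hadd := hadd.2 ⟨hxs, hw.1⟩
  replace hsub := hsub.2 ⟨hxs, hw.2⟩
  have hnonneg {y : Euc n} (hy : y ∈ dual (innerₗ (Euc n)) s) : 0 ≤ ⟪u, y⟫ := by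
    rcases eq_or_ne y 0 with rfl | hy0
    · simp
    · have := hu _ ((h.inv_norm_smul_mem_iff hy0).2 hy)
      rw [real_inner_smul_right] at this
      exact (mul_nonneg_iff_of_pos_left (inv_pos.2 (norm_pos_iff.2 hy0))).1 this
  have huw : ⟪u, t • x + w⟫ = 0 := by
    have h₁ := hnonneg hadd
    have h₂ := hnonneg hsub
    simp only [inner_add_right, inner_neg_right, real_inner_smul_right, hux] at h₁ h₂ ⊢
    linarith
  have hspan : t • x + w ∈ span ℝ {x} := by
    rcases eq_or_ne (t • x + w) 0 with h0 | h0
    · simp [h0]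
    · have hmem : ‖t • x + w‖⁻¹ • (t • x + w) = x :=
        hface.le ⟨(h.inv_norm_smul_mem_iff h0).2 hadd, by rw [real_inner_smul_right, huw, mul_zero]⟩
      exact (smul_mem_iff _ (inv_ne_zero (norm_ne_zero_iff.2 h0))).1
        (mem_span_singleton.2 ⟨1, (one_smul ℝ x).trans hmem.symm⟩)
  exact (add_mem_cancel_left (smul_mem _ t (mem_span_singleton_self x))).1 hspan

/-- The sum of the active normals at `x` supports `Q` exactly at `x`. -/
lemma IsNormalSet.isSphVertex_of_lineal_dual_activeNormals_le (h : IsNormalSet Q s)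
    (hx : x ∈ Q) (hneg : -x ∉ Q)
    (hle : (dual (innerₗ (Euc n)) (activeNormals (innerₗ (Euc n)) s x)).lineal ≤ span ℝ {x}) :
    IsSphVertex Q x := by
  have hfin := h.finite.subset (activeNormals_subset (p := innerₗ (Euc n)) (v := x))
  have hinner (y : Euc n) : ⟪∑ c ∈ hfin.toFinset, c, y⟫ = ∑ c ∈ hfin.toFinset, ⟪c, y⟫ :=
    sum_inner _ _ _
  have hnonneg : ∀ y ∈ Q, ∀ c ∈ hfin.toFinset, 0 ≤ ⟪c, y⟫ := fun y hy c hc ↦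
    (h.mem_iff.1 hy).2 (hfin.mem_toFinset.1 hc).1
  refine ⟨∑ c ∈ hfin.toFinset, c, fun y hy ↦ hinner y ▸ Finset.sum_nonneg (hnonneg y hy), ?_⟩
  refine Subset.antisymm ?_ (singleton_subset_iff.2 ⟨hx, ?_⟩)
  · rintro y ⟨hy, hy0⟩
    rw [hinner, Finset.sum_eq_zero_iff_of_nonneg (hnonneg y hy)] at hy0
    have hyspan : y ∈ span ℝ {x} :=
      hle <| mem_lineal_dual_iff.2 fun c hc ↦ hy0 c (hfin.mem_toFinset.2 hc)
    exact (eq_or_eq_neg_of_mem_unitSphere (h.mem_iff.1 hx).1 (h.mem_iff.1 hy).1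
      hyspan).resolve_right fun hyx ↦ hneg (hyx ▸ hy)
  · rw [hinner]
    exact Finset.sum_eq_zero fun c hc ↦ (hfin.mem_toFinset.1 hc).2

lemma IsNormalSet.not_isBType_of_isSphVertex (h : IsNormalSet Q s) (hx : IsSphVertex Q x) :
    ¬ IsBType Q := by
  rintro ⟨y, hy, hny⟩
  have hspan : y ∈ span ℝ {x} := h.lineal_dual_activeNormals_le_of_isSphVertex hx <|
    lineal_dual_le_lineal_dual_activeNormals ⟨(h.mem_iff.1 hy).2, (h.mem_iff.1 hny).2⟩
  rcases eq_or_eq_neg_of_mem_unitSphere (h.mem_iff.1 hx.mem).1 (h.mem_iff.1 hy).1 hspan with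
    rfl | rfl
  · exact h.neg_notMem_of_isSphVertex hx hny
  · exact h.neg_notMem_of_isSphVertex hx hy

lemma IsNormalSet.exists_isPointedAlong_cons (h : IsNormalSet Q s)
    (hint : (sphInterior Q).Nonempty) (hx : IsSphVertex Q x) :
    ∃ l, IsPointedAlong (innerₗ (Euc n)) (x :: l) s ∧ span ℝ {u | u ∈ x :: l} = ⊤ := by
  obtain ⟨y, hy⟩ := hint
  have hpos := (h.mem_sphInterior_iff.1 hy).2
  obtain ⟨hx1, hxs⟩ := h.mem_iff.1 hx.mem
  obtain ⟨l, hl, hcod⟩ := exists_isPointedAlong_codisjoint (p := innerₗ (Euc n))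
    (s := activeNormals (innerₗ (Euc n)) s x) (h.finite.subset activeNormals_subset)
    fun c hc ↦ hpos c hc.1
  have hneg : -x ∉ dual (innerₗ (Euc n)) s := fun hneg ↦
    h.neg_notMem_of_isSphVertex hx (h.mem_iff.2 ⟨by simpa [mem_unitSphere] using hx1, hneg⟩)
  refine ⟨l, ⟨.inl ⟨hxs, hneg⟩, hl⟩, ?_⟩
  rw [span_setOf_mem_cons, sup_comm, ← codisjoint_iff]
  exact hcod.mono_right (h.lineal_dual_activeNormals_le_of_isSphVertex hx)

lemma IsNormalSet.isSphVertex_or_isSphVertex_neg (h : IsNormalSet Q s) (hx : x ∈ unitSphere n)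
    {l : List (Euc n)} (hl : IsPointedAlong (innerₗ (Euc n)) (x :: l) s)
    (hspan : span ℝ {u | u ∈ x :: l} = ⊤) :
    IsSphVertex Q x ∨ IsSphVertex Q (-x) := by
  have hx' : -x ∈ unitSphere n := by simpa [mem_unitSphere] using hx
  have hle := hl.lineal_dual_activeNormals_le hspan
  rcases hl.1 with ⟨hmem, hneg⟩ | ⟨hmem, hneg⟩
  · exact .inl <| h.isSphVertex_of_lineal_dual_activeNormals_le (h.mem_iff.2 ⟨hx, hmem⟩)
      (fun hx ↦ hneg (h.mem_iff.1 hx).2) hle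
  · refine .inr <| h.isSphVertex_of_lineal_dual_activeNormals_le (h.mem_iff.2 ⟨hx', hmem⟩) ?_ ?_
    · rw [neg_neg]
      exact fun hx ↦ hneg (h.mem_iff.1 hx).2
    · rwa [activeNormals_neg, ← Set.neg_singleton, span_neg]

/-- The additional wall `xᗮ` excludes the origin, which has no radial projection to the sphere. -/
lemma IsSphTiling.isConeTiling {𝒯 : Finset (Set (Euc n))} (h𝒯 : IsSphTiling 𝒯)
    {s : Set (Euc n) → Set (Euc n)} (hs : ∀ Q ∈ 𝒯, IsNormalSet Q (s Q)) (x : Euc n) :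
    IsConeTiling (innerₗ (Euc n)) (insert x (⋃ Q ∈ 𝒯, s Q)) 𝒯 s where
  finite_walls := (𝒯.finite_toSet.biUnion fun Q hQ ↦ (hs Q hQ).finite).insert x
  finite_normals Q hQ := (hs Q hQ).finite
  existsUnique y hy := by
    obtain ⟨-, hcover, hdisj⟩ := h𝒯
    have hy0 : y ≠ 0 := by
      rintro rfl
      exact hy x (mem_insert _ _) (map_zero _)
    have hint : ∀ Q ∈ 𝒯, y ∈ dual (innerₗ (Euc n)) (s Q) → ‖y‖⁻¹ • y ∈ sphInterior Q := by
      refine fun Q hQ hyQ ↦ (hs Q hQ).mem_sphInterior_iff.2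
        ⟨inv_norm_smul_mem_unitSphere hy0, fun c hc ↦ ?_⟩
      rw [real_inner_smul_right]
      exact mul_pos (inv_pos.2 (norm_pos_iff.2 hy0)) <|
        (hyQ hc).lt_of_ne' (hy c (.inr (mem_biUnion hQ hc)))
    obtain ⟨Q, hQ, hyQ⟩ := mem_iUnion₂.1 (hcover.ge (inv_norm_smul_mem_unitSphere hy0))
    rw [(hs Q hQ).inv_norm_smul_mem_iff hy0] at hyQ
    refine ⟨Q, ⟨hQ, hyQ⟩, fun Q' ⟨hQ', hyQ'⟩ ↦ by_contra fun hne ↦ ?_⟩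
    exact (hdisj Q' hQ' Q hQ hne).le ⟨hint Q' hQ' hyQ', hint Q hQ hyQ⟩

end Sphere

theorem exactly_two_atype_general {n : ℕ} {𝒯 : Finset (Set (Euc n))} (h𝒯 : IsSphTiling 𝒯)
    {P : Set (Euc n)} (hP : P ∈ 𝒯) {x : Euc n} (hx : IsSphVertex P x) :
    ∃ Q ∈ 𝒯, Q ≠ P ∧ ¬ IsBType Q ∧ (IsSphVertex Q x ∨ IsSphVertex Q (-x)) := by
  choose! s hs using fun Q hQ ↦ (h𝒯.1 Q hQ).1.exists_isNormalSet
  have hx1 : x ∈ unitSphere n := ((hs P hP).mem_iff.1 hx.mem).1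
  have hx0 : x ≠ 0 := norm_ne_zero_iff.1 (by simp [mem_unitSphere.1 hx1])
  obtain ⟨l, hl, hspan⟩ := (hs P hP).exists_isPointedAlong_cons (h𝒯.1 P hP).2 hx
  have hwalls : ∀ c ∈ insert x (⋃ Q ∈ 𝒯, s Q), innerₗ (Euc n) c ≠ 0 := by
    intro c hc hc0
    have hc0 : c = 0 := inner_self_eq_zero (𝕜 := ℝ).1 (LinearMap.congr_fun hc0 c)
    subst hc0
    obtain hc | hc := hc
    · exact hx0 hc.symm
    · obtain ⟨Q, hQ, hc⟩ := mem_iUnion₂.1 hc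
      exact (hs Q hQ).zero_notMem hc
  obtain ⟨Q, hQ, hQP, hlQ⟩ := (h𝒯.isConeTiling hs x).exists_ne_isPointedAlong hwalls hspan
    (List.cons_ne_nil x l) hP hl
  have hvertex := (hs Q hQ).isSphVertex_or_isSphVertex_neg hx1 hlQ hspan
  exact ⟨Q, hQ, hQP, hvertex.elim (hs Q hQ).not_isBType_of_isSphVertex
    (hs Q hQ).not_isBType_of_isSphVertex, hvertex⟩

/-- If a tiling of `Sⁿ` (with `n > 1`) by convex spherical polytopes contains exactly
two A-type polytopes `P, P'` and `x` is a vertex of `P`, then `x` or `-x` is a vertex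
of `P'`. -/
theorem exactly_two_atype (n : ℕ) (hn : 1 < n) (𝒯 : Finset (Set (Euc (n + 1))))
    (h𝒯 : IsSphTiling 𝒯)
    (P P' : Set (Euc (n + 1))) (hP : P ∈ 𝒯) (hP' : P' ∈ 𝒯) (hne : P ≠ P')
    (hPA : ¬ IsBType P) (hP'A : ¬ IsBType P')
    (honly : ∀ Q ∈ 𝒯, ¬ IsBType Q → Q = P ∨ Q = P')
    (x : Euc (n + 1)) (hx : IsSphVertex P x) :
    IsSphVertex P' x ∨ IsSphVertex P' (-x) := by
  obtain ⟨Q, hQ, hQP, hQA, hvertex⟩ := exactly_two_atype_general h𝒯 hP hx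
  exact (honly Q hQ hQA).resolve_left hQP ▸ hvertex
end
end
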